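/- arXiv:2605.27312 — 4 statements merged into one kernel-verified Lean document; each statement's English description precedes it below -/
import Mathlib

section
/- Let C be a binary linear code of block length N whose automorphism group is the full symmetric group S_N. Then C is one of exactly four codes: the zero code {0}, the repetition code {0, 1…1}, the single parity check code (all even-weight vectors in F_2^N), or the full space F_2^N. -/
open Matrix

/-- The automorphism group of a binary code of length `|I|` (as a set of coordinate
permutations): those permutations of the index set that map the code onto itself. -/
def codeAut {I : Type} (C : Set (I → ZMod 2)) : Set (Equiv.Perm I) :=
  { π | (fun c => c ∘ ⇑π.symm) '' C = C }

/-- A binary linear code of block length `N` whose automorphism group is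
the full symmetric group `S_N` is one of: the zero code, the repetition code, the single
parity check code, or the full space `F_2^N`. -/
theorem statement13 (N : ℕ) (C : Submodule (ZMod 2) (Fin N → ZMod 2))
    (h : codeAut (C : Set (Fin N → ZMod 2)) = Set.univ) :
    (C : Set (Fin N → ZMod 2)) = {0} ∨
    (C : Set (Fin N → ZMod 2)) = {c | ∃ x : ZMod 2, ∀ i, c i = x} ∨
    (C : Set (Fin N → ZMod 2)) = {c | ∑ i, c i = 0} ∨
    (C : Set (Fin N → ZMod 2)) = Set.univ := by
  have hp : ∀ (π : Equiv.Perm (Fin N)) (c : Fin N → ZMod 2), c ∈ C → c ∘ ⇑π.symm ∈ C := by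
    intro π c hc
    have h1 : π ∈ codeAut (C : Set (Fin N → ZMod 2)) := by rw [h]; trivial
    have h2 : (fun c : Fin N → ZMod 2 => c ∘ ⇑π.symm) '' (C : Set (Fin N → ZMod 2)) = C := h1
    have h3 : c ∘ ⇑π.symm ∈ (C : Set (Fin N → ZMod 2)) := by
      rw [← h2]; exact ⟨c, hc, rfl⟩
    exact h3
  have two : ∀ x : ZMod 2, x = 0 ∨ x = 1 := by decide
  by_cases hconst : ∀ c ∈ C, ∀ i j, c i = c j
  · by_cases hz : ∀ c ∈ C, c = 0
    · left
      ext c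
      simp only [SetLike.mem_coe, Set.mem_singleton_iff]
      exact ⟨hz c, fun e => e ▸ C.zero_mem⟩
    · right; left
      push Not at hz
      obtain ⟨d, hd, hd0⟩ := hz
      obtain ⟨k, hk⟩ := Function.ne_iff.mp hd0
      have hk1 : d k = 1 := (two (d k)).resolve_left hk
      ext c
      simp only [SetLike.mem_coe, Set.mem_setOf_eq]
      constructor
      · intro hc
        exact ⟨c k, fun i => hconst c hc i k⟩
      · rintro ⟨x, hx⟩
        have : c = x • d := by
          ext i
          simp [hx i, hconst d hd i k, hk1]
        rw [this]
        exact C.smul_mem x hd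
  · push Not at hconst
    obtain ⟨c, hc, i, j, hij⟩ := hconst
    have hne : i ≠ j := fun e => hij (by rw [e])
    have key : ∀ x y : ZMod 2, x ≠ y → x + y = 1 := by decide
    have dbl : ∀ x : ZMod 2, x + x = 0 := by decide
    have hE : (Pi.single i 1 + Pi.single j 1 : Fin N → ZMod 2) ∈ C := by
      have : (Pi.single i 1 + Pi.single j 1 : Fin N → ZMod 2)
          = c + c ∘ ⇑(Equiv.swap i j).symm := by
        ext k
        simp only [Pi.add_apply, Function.comp_apply, Equiv.symm_swap]
        by_cases h1 : k = i
        · subst h1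
          simp [hne, key _ _ hij]
        · by_cases h2 : k = j
          · subst h2
            simp [h1, key _ _ hij.symm]
          · simp [h1, h2, Equiv.swap_apply_of_ne_of_ne h1 h2, dbl]
      rw [this]
      exact C.add_mem hc (hp _ c hc)
    have hA : ∀ a, (Pi.single i 1 + Pi.single a 1 : Fin N → ZMod 2) ∈ C := by
      intro a
      by_cases hai : a = i
      · subst hai
        rw [← Pi.single_add, dbl, Pi.single_zero]
        exact C.zero_mem
      · have := hp (Equiv.swap j a) _ hE
        convert this using 1
        ext k
        simp only [Pi.add_apply, Function.comp_apply, Equiv.symm_swap, Pi.single_apply,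
          Equiv.swap_apply_def]
        have := Ne.symm hne
        have := Ne.symm hai
        grind
    have hev : ∀ v : Fin N → ZMod 2, ∑ a, v a = 0 → v ∈ C := by
      intro v hv
      have : v = ∑ a, v a • (Pi.single i 1 + Pi.single a 1 : Fin N → ZMod 2) := by
        simp only [smul_add, Finset.sum_add_distrib, ← Finset.sum_smul, hv, zero_smul, zero_add]
        exact pi_eq_sum_univ' v
      rw [this]
      exact C.sum_mem fun a _ => C.smul_mem _ (hA a)
    right; right
    by_cases hodd : ∀ d ∈ C, ∑ a, d a = 0
    · left
      ext v
      exact ⟨hodd v, hev v⟩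
    · right
      push Not at hodd
      obtain ⟨d, hd, hd0⟩ := hodd
      refine Set.eq_univ_of_forall fun v => ?_
      by_cases hv : ∑ a, v a = 0
      · exact hev v hv
      · have h1 : v - d ∈ C := by
          apply hev
          simp only [Pi.sub_apply, Finset.sum_sub_distrib]
          rw [(two _).resolve_left hv, (two _).resolve_left hd0, sub_self]
        have := C.add_mem h1 hd
        simpa using this
end

section
/- Let m ≤ 3 and W ⊆ {0,1,…,m}. If W is not one of the boundary cases, then the automorphism group of the abelian code C(3,m,W) equals the wreath product S_3 ≀ S_m in its product action on Z_3^m; if W is a boundary case, then the automorphism group equals S_{3^m}. -/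
open Matrix

/-- The wreath product `S_α ≀ S_m` in its product action on `[α]^m`, realized as the
set of permutations of `Fin m → α` of the form `x ↦ (k ↦ σ_k (x (π⁻¹ k)))`. -/
def wreathPermSet (α : Type) (m : ℕ) : Set (Equiv.Perm (Fin m → α)) :=
  { f | ∃ (σ : Fin m → Equiv.Perm α) (π : Equiv.Perm (Fin m)),
      ∀ (x : Fin m → α) (k : Fin m), f x k = σ k (x (π⁻¹ k)) }

/-- The abelian code `C(n, m, W)`: binary vectors indexed by `(Z_n)^m` whose finite-field
DFT (with respect to a primitive `n`-th root of unity `α` in a field `K` of characteristic 2)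
vanishes at every frequency `j` whose Hamming weight lies outside `W`. -/
def abelianCode (n m : ℕ) [NeZero n] (W : Set ℕ) (K : Type) [Field K] (α : K) :
    Set ((Fin m → ZMod n) → ZMod 2) :=
  { a | ∀ j : Fin m → ZMod n, hammingNorm j ∉ W →
      ∑ i : Fin m → ZMod n, (if a i = 1 then (1 : K) else 0) * α ^ (∑ k, i k * j k).val = 0 }

/-- The four boundary cases of weight sets: `∅` (zero code), `{0}` (repetition code),
`{1,…,m}` (single parity check code), `{0,1,…,m}` (full space). -/
def BoundaryW (m : ℕ) (W : Set ℕ) : Prop :=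
  W = ∅ ∨ W = {0} ∨ W = Set.Icc 1 m ∨ W = Set.Iic m


open Polynomial in
lemma gen_poly (m : ℕ) (K : Type) [Field K] [CharP K 2] (α : K) (hα : IsPrimitiveRoot α 3)
    (i : Fin m → ZMod 3) :
    ∑ j : Fin m → ZMod 3, (X : K[X]) ^ hammingNorm j * C (α ^ (∑ k, i k * j k).val) =
      (1 + X) ^ hammingNorm i := by
  have h3 : α ^ 3 = 1 := hα.pow_eq_one
  have hs : α + α ^ 2 = 1 := by
    have hne : α ≠ 1 := hα.ne_one (by norm_num)
    have h2 : (2 : K) = 0 := CharP.cast_eq_zero K 2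
    have : (α - 1) * (α + α ^ 2 - 1) = 0 := by
      linear_combination h3 - (α - 1) * h2
    rcases mul_eq_zero.mp this with h | h
    · exact absurd (sub_eq_zero.mp h) hne
    · exact sub_eq_zero.mp h
  have e1 : ∀ j : Fin m → ZMod 3, (X : K[X]) ^ hammingNorm j * C (α ^ (∑ k, i k * j k).val)
      = ∏ k, ((if j k ≠ 0 then X else 1) * C (α ^ (i k * j k).val)) := by
    intro j
    rw [Finset.prod_mul_distrib]
    congr 1
    · rw [Finset.prod_ite, Finset.prod_const, Finset.prod_const_one, mul_one]
      rfl
    · rw [← map_prod]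
      congr 1
      have hz := fun a : ZMod 3 => AddChar.zmodChar_apply h3 a
      simp_rw [← hz]
      generalize (Finset.univ : Finset (Fin m)) = s
      induction s using Finset.induction_on with
      | empty => simp
      | insert a s ha ih => rw [Finset.sum_insert ha, Finset.prod_insert ha, AddChar.map_add_eq_mul, ih]
  have e2 : ∀ c : ZMod 3, ∑ d : ZMod 3, ((if d ≠ 0 then (X : K[X]) else 1) * C (α ^ (c * d).val))
      = if c ≠ 0 then 1 + X else 1 := by
    have h2 : (2 : K[X]) = 0 := CharP.cast_eq_zero K[X] 2
    have hs' : (C α + C α ^ 2 : K[X]) = 1 := by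
      rw [← C_pow, ← C_add, hs, C_1]
    intro c
    have hc : c = 0 ∨ c = 1 ∨ c = 2 := by revert c; decide
    have hu : (Finset.univ : Finset (ZMod 3)) = {0, 1, 2} := by decide
    have v1 : (1 : ZMod 3).val = 1 := rfl
    have v2 : (2 : ZMod 3).val = 2 := rfl
    have v4 : (2 * 2 : ZMod 3).val = 1 := rfl
    have n2 : (2 : ZMod 3) ≠ 0 := by decide
    have n12 : (1 : ZMod 3) ≠ 2 := by decide
    rcases hc with rfl | rfl | rfl
    · rw [hu, Finset.sum_insert (by decide), Finset.sum_insert (by decide), Finset.sum_singleton]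
      simp [n2]
      linear_combination X * h2
    · rw [hu, Finset.sum_insert (by decide), Finset.sum_insert (by decide), Finset.sum_singleton]
      simp [n2, v1, v2]
      linear_combination X * hs'
    · rw [hu, Finset.sum_insert (by decide), Finset.sum_insert (by decide), Finset.sum_singleton]
      simp [n2, v2, v4]
      linear_combination X * hs'
  simp_rw [e1]
  have := Finset.prod_univ_sum (fun _ : Fin m => (Finset.univ : Finset (ZMod 3)))
    (fun k d => ((if d ≠ 0 then (X : K[X]) else 1) * C (α ^ (i k * d).val)))
  rw [Fintype.piFinset_univ] at this
  rw [← this]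
  simp_rw [e2]
  rw [Finset.prod_ite, Finset.prod_const, Finset.prod_const_one, mul_one]
  rfl

def wt3 (a b c : ZMod 3) : ℕ := (if a = 0 then 0 else 1) + (if b = 0 then 0 else 1) + (if c = 0 then 0 else 1)
def hb (b0 b1 b2 b3 : Bool) (d : ℕ) : Bool := match d with | 0 => b0 | 1 => b1 | 2 => b2 | _ => b3
def cnt3 (b0 b1 b2 b3 : Bool) (x y z : ZMod 3) : ℕ :=
  ∑ a : ZMod 3, ∑ b : ZMod 3, ∑ c : ZMod 3, if hb b0 b1 b2 b3 (wt3 a b c) && hb b0 b1 b2 b3 (wt3 (x-a) (y-b) (z-c)) then 1 else 0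
def rep3 (d e : ℕ) : ZMod 3 := if e ≤ d then 1 else 0
lemma keyCountA : ∀ b0 b1 b2 b3 : Bool, ∀ x y z : ZMod 3, cnt3 b0 b1 b2 b3 x y z = cnt3 b0 b1 b2 b3 (rep3 (wt3 x y z) 1) (rep3 (wt3 x y z) 2) (rep3 (wt3 x y z) 3) := by
  decide +kernel
lemma keyCountB : ∀ b0 b1 b2 b3 : Bool, ¬ (b1 = b2 ∧ b2 = b3) → ∀ d d' : Fin 4, d ≠ 0 → d' ≠ 0 →
   hb b0 b1 b2 b3 d.val = hb b0 b1 b2 b3 d'.val → cnt3 b0 b1 b2 b3 (rep3 d.val 1) (rep3 d.val 2) (rep3 d.val 3) = cnt3 b0 b1 b2 b3 (rep3 d'.val 1) (rep3 d'.val 2) (rep3 d'.val 3) → d = d' := by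
  decide +kernel
/-- number of sets counted, whose parity is the entry of the projector -/
noncomputable def gW (m : ℕ) (W : Set ℕ) (d : ℕ) : ℕ :=
  open Classical in ∑ w ∈ Finset.range (m + 1), if w ∈ W then d.choose w else 0

lemma hammingNorm_le (m : ℕ) (j : Fin m → ZMod 3) : hammingNorm j ≤ m := by
  simpa using hammingNorm_le_card_fintype (x := j)

section
variable (m : ℕ) (W : Set ℕ) (K : Type) [Field K] [CharP K 2] (α : K)
open Classical

lemma sum_char (hα : IsPrimitiveRoot α 3) (i : Fin m → ZMod 3) :
    ∑ j : Fin m → ZMod 3, (if hammingNorm j ∈ W then (1 : K) else 0) * α ^ (∑ k, i k * j k).val =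
      (gW m W (hammingNorm i) : K) := by
  have hg := gen_poly m K α hα i
  have hc : ∀ w : ℕ, ∑ j : Fin m → ZMod 3, (if hammingNorm j = w then α ^ (∑ k, i k * j k).val else 0)
      = ((hammingNorm i).choose w : K) := by
    intro w
    have := congrArg (fun p => Polynomial.coeff p w) hg
    simp only [Polynomial.finsetSum_coeff, Polynomial.coeff_mul_C, Polynomial.coeff_X_pow,
      Polynomial.coeff_one_add_X_pow] at this
    rw [← this]
    refine Finset.sum_congr rfl fun j _ => ?_
    by_cases h : hammingNorm j = w
    · simp [h]
    · simp [h, Ne.symm h]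
  unfold gW
  push_cast
  have : ∀ w ∈ Finset.range (m + 1), (((if w ∈ W then (hammingNorm i).choose w else 0 : ℕ)) : K) =
     ∑ j : Fin m → ZMod 3, if hammingNorm j = w then (if w ∈ W then α ^ (∑ k, i k * j k).val else 0) else 0 := by
    intro w _
    by_cases h : w ∈ W
    · simp only [h, if_true]; rw [hc]
    · simp [h]
  simp only [Nat.cast_ite, Nat.cast_zero] at this
  rw [Finset.sum_congr rfl this, Finset.sum_comm]
  refine Finset.sum_congr rfl fun j _ => ?_
  rw [Finset.sum_ite_eq]
  have := hammingNorm_le m j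
  have hm : hammingNorm j ∈ Finset.range (m + 1) := Finset.mem_range.mpr (by omega)
  rw [if_pos hm]
  by_cases h : hammingNorm j ∈ W <;> simp only [h, if_true, if_false, one_mul, zero_mul]

/-- Fourier matrix -/
def Fm : Matrix (Fin m → ZMod 3) (Fin m → ZMod 3) K := fun x j => α ^ (∑ k, x k * j k).val
/-- inverse Fourier matrix -/
def Fi : Matrix (Fin m → ZMod 3) (Fin m → ZMod 3) K := fun x j => α ^ (∑ k, (-x) k * j k).val
/-- projector -/
noncomputable def Em : Matrix (Fin m → ZMod 3) (Fin m → ZMod 3) K := fun x y => (gW m W (hammingDist x y) : K)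
/-- selection of frequencies -/
noncomputable def Dm : Matrix (Fin m → ZMod 3) (Fin m → ZMod 3) K :=
  Matrix.diagonal fun j => if hammingNorm j ∈ W then (1 : K) else 0

lemma chi_add (hα : IsPrimitiveRoot α 3) (a b : ZMod 3) : α ^ (a + b).val = α ^ a.val * α ^ b.val := by
  have hz := fun a : ZMod 3 => AddChar.zmodChar_apply hα.pow_eq_one a
  simp_rw [← hz]
  rw [AddChar.map_add_eq_mul]

lemma fact_aux (hα : IsPrimitiveRoot α 3) : Fi m K α * Dm m W K * Fm m K α = Em m W K := by
  ext x y
  rw [Matrix.mul_apply, Em, hammingDist_eq_hammingNorm, ← sum_char m W K α hα]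
  refine Finset.sum_congr rfl fun j _ => ?_
  rw [Dm, Matrix.mul_diagonal, Fi, Fm]
  have : ∑ k, (-x + y) k * j k = ∑ k, (-x) k * j k + ∑ k, j k * y k := by
    rw [← Finset.sum_add_distrib]
    exact Finset.sum_congr rfl fun k _ => by simp only [Pi.add_apply]; ring
  rw [this, chi_add K α hα]
  ring

lemma gW_univ (d : ℕ) (hd : d ≤ m) : gW m Set.univ d = 2 ^ d := by
  unfold gW
  simp only [Set.mem_univ, if_true]
  rw [← Nat.sum_range_choose]
  symm
  apply Finset.sum_subset
  · intro w; simp; omega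
  · intro w _ h; simp at h; exact Nat.choose_eq_zero_of_lt (by omega)

lemma FiF (hα : IsPrimitiveRoot α 3) : Fi m K α * Fm m K α = 1 := by
  have := fact_aux m Set.univ K α hα
  have hD : Dm m Set.univ K = 1 := by simp [Dm]
  rw [hD, mul_one] at this
  rw [this]
  ext x y
  rw [Em, gW_univ]
  · have h2 : (2 : K) = 0 := CharP.cast_eq_zero K 2
    push_cast
    rw [h2, Matrix.one_apply]
    by_cases h : x = y
    · simp [h]
    · simp [h]
  · simpa using hammingDist_le_card_fintype (x := x) (y := y)

lemma FFi (hα : IsPrimitiveRoot α 3) : Fm m K α * Fi m K α = 1 :=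
  mul_eq_one_comm.mp (FiF m K α hα)

lemma Em_idem (hα : IsPrimitiveRoot α 3) : Em m W K * Em m W K = Em m W K := by
  rw [← fact_aux m W K α hα]
  have hD : Dm m W K * Dm m W K = Dm m W K := by
    rw [Dm, Matrix.diagonal_mul_diagonal]
    congr 1; ext j; split_ifs <;> simp
  calc _ = Fi m K α * Dm m W K * (Fm m K α * Fi m K α) * Dm m W K * Fm m K α := by
        simp only [mul_assoc]
    _ = Fi m K α * (Dm m W K * Dm m W K) * Fm m K α := by
        rw [FFi m K α hα]; simp only [mul_assoc, mul_one]
    _ = _ := by rw [hD]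

/-- cast of a binary vector -/
def Vc (a : (Fin m → ZMod 3) → ZMod 2) : (Fin m → ZMod 3) → K := fun i => if a i = 1 then 1 else 0

lemma mem_code_iff (hα : IsPrimitiveRoot α 3) (a : (Fin m → ZMod 3) → ZMod 2) :
    a ∈ abelianCode 3 m W K α ↔ Em m W K *ᵥ Vc m K a = Vc m K a := by
  have h1 : a ∈ abelianCode 3 m W K α ↔ Dm m W K *ᵥ (Fm m K α *ᵥ Vc m K a) = Fm m K α *ᵥ Vc m K a := by
    have hh : ∀ j, ∑ i : Fin m → ZMod 3, (if a i = 1 then (1 : K) else 0) * α ^ (∑ k, i k * j k).val =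
        (Fm m K α *ᵥ Vc m K a) j := by
      intro j
      simp only [Matrix.mulVec, dotProduct, Fm, Vc]
      refine Finset.sum_congr rfl fun i _ => ?_
      rw [mul_comm]
      simp_rw [mul_comm (i _)]
    simp only [abelianCode, Set.mem_ofPred_eq, hh]
    rw [funext_iff]
    refine forall_congr' fun j => ?_
    rw [Dm, Matrix.mulVec_diagonal]
    by_cases h : hammingNorm j ∈ W
    · simp [h]
    · simp [h, eq_comm]
  rw [h1, ← fact_aux m W K α hα]
  constructor
  · intro h
    rw [← Matrix.mulVec_mulVec, ← Matrix.mulVec_mulVec, h, Matrix.mulVec_mulVec, FiF m K α hα, Matrix.one_mulVec]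
  · intro h
    have := congrArg (fun v => Fm m K α *ᵥ v) h
    simp only [← Matrix.mulVec_mulVec] at this
    rw [Matrix.mulVec_mulVec _ (Fm m K α) (Fi m K α), FFi m K α hα, Matrix.one_mulVec] at this
    exact this

lemma Em_symm (x y) : Em m W K x y = Em m W K y x := by
  rw [Em, Em, hammingDist_comm]

lemma Em_01 (x y) : Em m W K x y = 0 ∨ Em m W K x y = 1 := by
  rw [Em]
  have h2 : ((2 : ℕ) : K) = 0 := CharP.cast_eq_zero K 2
  rcases Nat.even_or_odd' (gW m W (hammingDist x y)) with ⟨c, h | h⟩ <;> rw [h] <;> push_cast at * <;> simp [h2]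

/-- column of the projector as a codeword -/
noncomputable def colw (y : Fin m → ZMod 3) : (Fin m → ZMod 3) → ZMod 2 :=
  fun x => if Em m W K x y = 1 then 1 else 0

lemma Vc_comp (a : (Fin m → ZMod 3) → ZMod 2) (p : (Fin m → ZMod 3) → (Fin m → ZMod 3)) (z) :
    Vc m K (a ∘ p) z = Vc m K a (p z) := rfl

lemma Vc_colw (y) (x) : Vc m K (colw m W K y) x = Em m W K x y := by
  rcases Em_01 m W K x y with h | h <;> simp [Vc, colw, h]

lemma colw_mem (hα : IsPrimitiveRoot α 3) (y) : colw m W K y ∈ abelianCode 3 m W K α := by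
  rw [mem_code_iff m W K α hα]
  ext x
  have := congrFun (congrFun (Em_idem m W K α hα) x) y
  rw [Matrix.mul_apply] at this
  simp only [Matrix.mulVec, dotProduct, Vc_colw]
  exact this

lemma mem_comp (hα : IsPrimitiveRoot α 3) (π : Equiv.Perm (Fin m → ZMod 3))
    (h : ∀ x y, Em m W K (π x) (π y) = Em m W K x y) (a) (ha : a ∈ abelianCode 3 m W K α) :
    a ∘ π ∈ abelianCode 3 m W K α := by
  rw [mem_code_iff m W K α hα] at *
  ext x
  have := congrFun ha (π x)
  simp only [Matrix.mulVec, dotProduct] at *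
  rw [← Equiv.sum_comp π] at this
  simp only [h] at this
  exact this

lemma codeAut_iff (hα : IsPrimitiveRoot α 3) (π : Equiv.Perm (Fin m → ZMod 3)) :
    π ∈ codeAut (abelianCode 3 m W K α) ↔ ∀ x y, Em m W K (π x) (π y) = Em m W K x y := by
  unfold codeAut
  rw [Set.mem_ofPred_eq]
  constructor
  · intro h
    have h1 : ∀ a ∈ abelianCode 3 m W K α, a ∘ π.symm ∈ abelianCode 3 m W K α := by
      intro a ha
      rw [← h]
      exact ⟨a, ha, rfl⟩
    have h2 : ∀ a ∈ abelianCode 3 m W K α, a ∘ π ∈ abelianCode 3 m W K α := by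
      intro a ha
      rw [← h] at ha
      obtain ⟨b, hb, rfl⟩ := ha
      convert hb using 1
      ext x; simp
    intro x y
    have e1 := congrFun ((mem_code_iff m W K α hα _).mp (h1 _ (colw_mem m W K α hα y))) (π x)
    have e2 := congrFun ((mem_code_iff m W K α hα _).mp (h2 _ (colw_mem m W K α hα (π x)))) y
    have v1 : ∀ z, Vc m K (colw m W K y ∘ π.symm) z = Em m W K (π.symm z) y := by
      intro z; rw [Vc_comp, Vc_colw]
    have v2 : ∀ z, Vc m K (colw m W K (π x) ∘ π) z = Em m W K (π z) (π x) := by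
      intro z; rw [Vc_comp, Vc_colw]
    simp only [Matrix.mulVec, dotProduct, v1, v2] at e1 e2
    rw [← Equiv.sum_comp π] at e1
    simp only [Equiv.symm_apply_apply] at e1
    rw [← e1, Em_symm, ← e2]
    refine Finset.sum_congr rfl fun z _ => ?_
    rw [Em_symm m W K y z, Em_symm m W K (π z)]
    ring
  · intro h
    have h' : ∀ x y, Em m W K (π.symm x) (π.symm y) = Em m W K x y := by
      intro x y
      rw [← h]; simp
    apply Set.Subset.antisymm
    · rintro _ ⟨a, ha, rfl⟩
      exact mem_comp m W K α hα π.symm h' a ha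
    · intro a ha
      refine ⟨a ∘ π, mem_comp m W K α hα π h a ha, ?_⟩
      ext x; simp

lemma Em_eq_iff (x y z w) : Em m W K x y = Em m W K z w ↔
    gW m W (hammingDist x y) % 2 = gW m W (hammingDist z w) % 2 := by
  rw [Em, Em]
  exact CharP.natCast_eq_natCast K 2
end

lemma dist_step {m : ℕ} (u v w : Fin m → ZMod 3) (r : Fin m) (h : ∀ l, l ≠ r → u l = v l) :
    hammingDist w v + (if w r ≠ u r then 1 else 0) = hammingDist w u + (if w r ≠ v r then 1 else 0) := by
  unfold hammingDist
  rw [Finset.card_filter, Finset.card_filter, ← Finset.add_sum_erase _ _ (Finset.mem_univ r),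
    ← Finset.add_sum_erase Finset.univ (fun i => if w i ≠ u i then 1 else 0) (Finset.mem_univ r)]
  have : ∑ x ∈ Finset.univ.erase r, (if w x ≠ v x then 1 else 0) =
      ∑ x ∈ Finset.univ.erase r, (if w x ≠ u x then 1 else 0) := by
    refine Finset.sum_congr rfl fun l hl => ?_
    rw [h l (Finset.ne_of_mem_erase hl)]
  rw [this]
  ring

lemma affine_inj : ∀ a b : ZMod 3, a ≠ b → Function.Injective (fun t : ZMod 3 => a + t * (b - a)) := by
  unfold Function.Injective
  decide

lemma third : ∀ a b c t : ZMod 3, a ≠ b → (c = a ↔ t = 0) → (c = b ↔ t = 1) → c = a + t * (b - a) := by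
  decide

/-- Isometries of the Hamming space lie in the wreath product. -/
lemma wreath_of_isom (m : ℕ) (f : Equiv.Perm (Fin m → ZMod 3))
    (h : ∀ x y, hammingDist (f x) (f y) = hammingDist x y) : f ∈ wreathPermSet (ZMod 3) m := by
  have h1 : ∀ k : Fin m, ∃ r, ∀ l, f 0 l ≠ f (Pi.single k 1) l ↔ l = r := by
    intro k
    have hd : hammingDist (0 : Fin m → ZMod 3) (Pi.single k 1) = 1 := by
      unfold hammingDist
      rw [Finset.card_eq_one]
      refine ⟨k, ?_⟩
      ext l
      by_cases hl : l = k
      · subst hl; simp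
      · simp [hl]
    rw [← h] at hd
    unfold hammingDist at hd
    obtain ⟨r, hr⟩ := Finset.card_eq_one.mp hd
    refine ⟨r, fun l => ?_⟩
    have := Finset.ext_iff.mp hr l
    simpa using this
  choose ρ hρ using h1
  have hne : ∀ k, f 0 (ρ k) ≠ f (Pi.single k 1) (ρ k) := fun k => (hρ k (ρ k)).mpr rfl
  have key : ∀ x k, (f x (ρ k) = f 0 (ρ k) ↔ x k = 0) ∧ (f x (ρ k) = f (Pi.single k 1) (ρ k) ↔ x k = 1) := by
    intro x k
    have e1 := dist_step (f 0) (f (Pi.single k 1)) (f x) (ρ k) (by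
      intro l hl
      by_contra hc
      exact hl ((hρ k l).mp hc))
    have e2 := dist_step 0 (Pi.single k 1) x k (by
      intro l hl
      simp [hl])
    rw [h, h] at e1
    have h01 : (0 : ZMod 3) ≠ 1 := by decide
    have := hne k
    simp only [Pi.zero_apply, Pi.single_eq_same] at e2
    generalize f x (ρ k) = c at *
    generalize f 0 (ρ k) = a at *
    generalize f (Pi.single k 1) (ρ k) = b at *
    generalize x k = t at *
    constructor <;> constructor <;> intro hh <;> subst hh <;> simp_all <;> split_ifs at * <;> simp_all <;> omega
  have hinj : Function.Injective ρ := by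
    intro k l hkl
    by_contra hc
    have := ((key (Pi.single l 1) k).1).mpr (by simp [hc])
    rw [hkl] at this
    exact hne l this.symm
  let π : Equiv.Perm (Fin m) := Equiv.ofBijective ρ (Finite.injective_iff_bijective.mp hinj)
  have hπ : ∀ k, ρ (π⁻¹ k) = k := fun k => π.apply_symm_apply k
  have hne' : ∀ k, f 0 k ≠ f (Pi.single (π⁻¹ k) 1) k := by
    intro k
    have := hne (π⁻¹ k)
    rwa [hπ] at this
  refine ⟨fun k => Equiv.ofBijective _ (Finite.injective_iff_bijective.mp (affine_inj _ _ (hne' k))), π, ?_⟩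
  intro x k
  have := key x (π⁻¹ k)
  rw [hπ] at this
  exact third _ _ _ _ (hne' k) this.1 this.2

lemma isom_of_wreath (m : ℕ) (f : Equiv.Perm (Fin m → ZMod 3)) (hf : f ∈ wreathPermSet (ZMod 3) m)
    (x y) : hammingDist (f x) (f y) = hammingDist x y := by
  obtain ⟨σ, π, h⟩ := hf
  unfold hammingDist
  refine Finset.card_bij (fun k _ => π⁻¹ k) ?_ ?_ ?_
  · intro k; simp [h]
  · intro a _ b _ hab; exact π⁻¹.injective hab
  · intro k hk
    refine ⟨π k, ?_, by simp⟩
    simpa [h] using hk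

/-- triples as functions -/
def tripleEquiv : (ZMod 3 × ZMod 3 × ZMod 3) ≃ (Fin 3 → ZMod 3) where
  toFun p := ![p.1, p.2.1, p.2.2]
  invFun f := (f 0, f 1, f 2)
  left_inv p := rfl
  right_inv f := by ext i; fin_cases i <;> rfl

lemma norm3 (z : Fin 3 → ZMod 3) : hammingNorm z = wt3 (z 0) (z 1) (z 2) := by
  unfold hammingNorm wt3
  rw [Finset.card_filter, Fin.sum_univ_three]
  simp

lemma cnt3_eq (b0 b1 b2 b3 : Bool) (v : Fin 3 → ZMod 3) :
    ∑ z : Fin 3 → ZMod 3, (if hb b0 b1 b2 b3 (hammingNorm z) && hb b0 b1 b2 b3 (hammingNorm (v - z)) then 1 else 0)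
     = cnt3 b0 b1 b2 b3 (v 0) (v 1) (v 2) := by
  rw [← Equiv.sum_comp tripleEquiv, Fintype.sum_prod_type]
  simp_rw [Fintype.sum_prod_type, norm3]
  rfl

lemma dist_le (m : ℕ) (x y : Fin m → ZMod 3) : hammingDist x y ≤ m := by
  simpa using hammingDist_le_card_fintype (x := x) (y := y)

lemma isom3 (b0 b1 b2 b3 : Bool) (hnc : ¬ (b1 = b2 ∧ b2 = b3)) (f : Equiv.Perm (Fin 3 → ZMod 3))
    (h : ∀ x y, hb b0 b1 b2 b3 (hammingDist (f x) (f y)) = hb b0 b1 b2 b3 (hammingDist x y)) (x y) :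
    hammingDist (f x) (f y) = hammingDist x y := by
  by_cases hxy : x = y
  · subst hxy; simp
  have hN : ∀ x y : Fin 3 → ZMod 3, ∑ z, (if hb b0 b1 b2 b3 (hammingDist x z) && hb b0 b1 b2 b3 (hammingDist z y) then 1 else 0)
      = cnt3 b0 b1 b2 b3 (rep3 (hammingDist x y) 1) (rep3 (hammingDist x y) 2) (rep3 (hammingDist x y) 3) := by
    intro x y
    rw [hammingDist_eq_hammingNorm x y, norm3, ← keyCountA, ← cnt3_eq, ← Equiv.sum_comp (Equiv.addLeft x)]
    refine Finset.sum_congr rfl fun z _ => ?_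
    rw [hammingDist_eq_hammingNorm, hammingDist_eq_hammingNorm]
    have e1 : -x + (Equiv.addLeft x) z = z := by simp
    have e2 : -(Equiv.addLeft x) z + y = -x + y - z := by simp; abel
    rw [e1, e2]
  have h1 := hN (f x) (f y)
  rw [← Equiv.sum_comp f] at h1
  simp only [h] at h1
  rw [hN x y] at h1
  have d1 := dist_le 3 x y
  have d2 := dist_le 3 (f x) (f y)
  have n1 : hammingDist x y ≠ 0 := by simpa using hxy
  have n2 : hammingDist (f x) (f y) ≠ 0 := by simpa using hxy
  have := keyCountB b0 b1 b2 b3 hnc ⟨hammingDist (f x) (f y), by omega⟩ ⟨hammingDist x y, by omega⟩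
    (by intro h; exact n2 (congrArg Fin.val h)) (by intro h; exact n1 (congrArg Fin.val h)) (h x y) h1.symm
  exact congrArg Fin.val this

/-- parity bit -/
noncomputable def bit (m : ℕ) (W : Set ℕ) (d : ℕ) : Bool := decide (gW m W d % 2 = 1)

lemma bit_eq (m W d d') (h : gW m W d % 2 = gW m W d' % 2) : bit m W d = bit m W d' := by
  unfold bit; rw [h]

lemma isom_of_parity (m : ℕ) (hm1 : 1 ≤ m) (hm3 : m ≤ 3) (W : Set ℕ) (hW : W ⊆ Set.Iic m)
    (hB : ¬ BoundaryW m W) (f : Equiv.Perm (Fin m → ZMod 3))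
    (h : ∀ x y, gW m W (hammingDist (f x) (f y)) % 2 = gW m W (hammingDist x y) % 2) (x y) :
    hammingDist (f x) (f y) = hammingDist x y := by
  have hext : ∀ V : Set ℕ, V ⊆ Set.Iic m → (∀ w ≤ m, (w ∈ W ↔ w ∈ V)) → W = V := by
    intro V hV hh
    ext w
    by_cases hw : w ≤ m
    · exact hh w hw
    · exact ⟨fun h => absurd (hW h) hw, fun h => absurd (hV h) hw⟩
  have hall : ¬ ((∀ w, 1 ≤ w → w ≤ m → w ∈ W) ∨ (∀ w, 1 ≤ w → w ≤ m → w ∉ W)) := by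
    intro hc
    apply hB
    unfold BoundaryW
    rcases hc with hc | hc <;> by_cases h0 : 0 ∈ W
    · right; right; right
      apply hext _ (le_refl _)
      intro w hw
      rcases Nat.eq_zero_or_pos w with rfl | h'
      · simp [h0]
      · simp [hc w h' hw, hw]
    · right; right; left
      apply hext _ (fun w hw => hw.2)
      intro w hw
      rcases Nat.eq_zero_or_pos w with rfl | h'
      · simp [h0]
      · simp [hc w h' hw, hw]; omega
    · right; left
      apply hext _ (by intro w hw; simp_all)
      intro w hw
      rcases Nat.eq_zero_or_pos w with rfl | h'
      · simp [h0]
      · simp [hc w h' hw]; omega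
    · left
      apply hext _ (by simp)
      intro w hw
      rcases Nat.eq_zero_or_pos w with rfl | h'
      · simp [h0]
      · simp [hc w h' hw]
  have hzero : hammingDist (f x) (f y) = 0 ↔ hammingDist x y = 0 := by simp
  have c1 : ∀ p : ℕ → Prop, (∀ w, 1 ≤ w → w ≤ 1 → p w) ↔ p 1 := by
    intro p
    refine ⟨fun h => h 1 (by omega) (by omega), fun h w h1 h2 => ?_⟩
    obtain rfl : w = 1 := by omega
    exact h
  have c2 : ∀ p : ℕ → Prop, (∀ w, 1 ≤ w → w ≤ 2 → p w) ↔ p 1 ∧ p 2 := by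
    intro p
    refine ⟨fun h => ⟨h 1 (by omega) (by omega), h 2 (by omega) (by omega)⟩, fun h w h1 h2 => ?_⟩
    interval_cases w <;> tauto
  have c3 : ∀ p : ℕ → Prop, (∀ w, 1 ≤ w → w ≤ 3 → p w) ↔ p 1 ∧ p 2 ∧ p 3 := by
    intro p
    refine ⟨fun h => ⟨h 1 (by omega) (by omega), h 2 (by omega) (by omega), h 3 (by omega) (by omega)⟩, fun h w h1 h2 => ?_⟩
    interval_cases w <;> tauto
  obtain rfl | rfl | rfl : m = 1 ∨ m = 2 ∨ m = 3 := by omega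
  · rw [c1, c1] at hall; tauto
  · have d1 := dist_le 2 x y
    have d2 := dist_le 2 (f x) (f y)
    have hg : gW 2 W 1 % 2 ≠ gW 2 W 2 % 2 := by
      rw [c2, c2] at hall
      simp only [gW, Finset.sum_range_succ, Finset.sum_range_zero]
      by_cases w0 : 0 ∈ W <;> by_cases w1 : 1 ∈ W <;> by_cases w2 : 2 ∈ W <;> simp_all
    have hh := h x y
    generalize hammingDist (f x) (f y) = d at *
    generalize hammingDist x y = e at *
    interval_cases d <;> interval_cases e <;> simp_all
  · refine isom3 (bit 3 W 0) (bit 3 W 1) (bit 3 W 2) (bit 3 W 3) ?_ f ?_ x y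
    · rw [c3, c3] at hall
      simp only [bit, gW, Finset.sum_range_succ, Finset.sum_range_zero]
      by_cases w0 : 0 ∈ W <;> by_cases w1 : 1 ∈ W <;> by_cases w2 : 2 ∈ W <;> by_cases w3 : 3 ∈ W <;>
        simp_all [Nat.choose]
    · have hbit : ∀ d ≤ 3, hb (bit 3 W 0) (bit 3 W 1) (bit 3 W 2) (bit 3 W 3) d = bit 3 W d := by
        intro d hd
        interval_cases d <;> rfl
      intro x y
      rw [hbit _ (dist_le 3 _ _), hbit _ (dist_le 3 _ _)]
      exact bit_eq _ _ _ _ (h x y)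

lemma gW_boundary (m : ℕ) (W : Set ℕ) (hB : BoundaryW m W) (d : ℕ) (hd : d ≤ m) (h0 : d ≠ 0) :
    gW m W d % 2 = gW m W 1 % 2 := by
  have hu : ∀ e, e ≤ m → e ≠ 0 → gW m Set.univ e % 2 = 0 := by
    intro e he h0
    rw [gW_univ m e he]
    obtain ⟨c, rfl⟩ := Nat.exists_eq_succ_of_ne_zero h0
    rw [pow_succ]; omega
  have hIic : ∀ e, gW m (Set.Iic m) e = gW m Set.univ e := by
    intro e
    unfold gW
    refine Finset.sum_congr rfl fun w hw => ?_
    have : w ≤ m := by have := Finset.mem_range.mp hw; omega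
    simp [this]
  have hIcc : ∀ e, gW m (Set.Icc 1 m) e + 1 = gW m Set.univ e := by
    intro e
    unfold gW
    rw [Finset.sum_range_succ', Finset.sum_range_succ']
    simp only [Set.mem_univ, if_true, Nat.choose_zero_right]
    have n0 : (0 : ℕ) ∉ Set.Icc 1 m := by simp
    rw [if_neg n0, add_zero]
    congr 1
    refine Finset.sum_congr rfl fun w hw => ?_
    have hw' := Finset.mem_range.mp hw
    have n1 : w + 1 ∈ Set.Icc 1 m := ⟨by omega, by omega⟩
    rw [if_pos n1]
  have u1 := hu d hd h0
  have u2 := hu 1 (by omega) (by omega)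
  rcases hB with rfl | rfl | rfl | rfl
  · simp [gW]
  · simp [gW]
  · have := hIcc d
    have := hIcc 1
    omega
  · rw [hIic, hIic, u1, u2]

/-- For `1 ≤ m ≤ 3` and `W ⊆ {0, 1, …, m}` not a boundary case, the
automorphism group of `C(3, m, W)` is the wreath product `S_3 ≀ S_m` in its product action
on `Z_3^m`; in the boundary cases it is the full symmetric group `S_{3^m}`. -/
theorem statement14 (m : ℕ) (hm1 : 1 ≤ m) (hm3 : m ≤ 3)
    (W : Set ℕ) (hW : W ⊆ Set.Iic m)
    (K : Type) [Field K] [CharP K 2] (α : K) (hα : IsPrimitiveRoot α 3) :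
    (¬ BoundaryW m W → codeAut (abelianCode 3 m W K α) = wreathPermSet (ZMod 3) m) ∧
    (BoundaryW m W → codeAut (abelianCode 3 m W K α) = Set.univ) := by
  refine ⟨fun hB => ?_, fun hB => ?_⟩
  · ext f
    rw [codeAut_iff m W K α hα]
    simp only [Em_eq_iff]
    constructor
    · intro h
      exact wreath_of_isom m f (isom_of_parity m hm1 hm3 W hW hB f h)
    · intro h x y
      rw [isom_of_wreath m f h]
  · rw [Set.eq_univ_iff_forall]
    intro f
    rw [codeAut_iff m W K α hα]
    simp only [Em_eq_iff]
    intro x y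
    by_cases hxy : x = y
    · subst hxy; simp
    · rw [gW_boundary m W hB _ (dist_le m _ _) (by simpa using hxy),
        gW_boundary m W hB _ (dist_le m _ _) (by simpa using hxy)]
end

section
/- Let m ≥ 1 and let W ⊆ {0,1,…,m} not be one of the boundary cases. Then the affine general linear group AGL(m,3), acting on F_3^m by x ↦ Ax + b with A invertible over F_3, is not a subgroup of the automorphism group of the abelian code C(3,m,W). -/
open Matrix

/-- The affine general linear group `AGL(m, 3)`, realized as the set of permutations of
`F_3^m` of the form `x ↦ A x + b` with `A` invertible. -/
def aglSet (m : ℕ) : Set (Equiv.Perm (Fin m → ZMod 3)) :=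
  { f | ∃ (A : Matrix (Fin m) (Fin m) (ZMod 3)) (b : Fin m → ZMod 3),
      IsUnit A ∧ ∀ x, f x = A.mulVec x + b }

lemma exists_equiv_map {m : ℕ} (u v : Fin m → ZMod 3) (hu : u ≠ 0) (hv : v ≠ 0) :
    ∃ g : (Fin m → ZMod 3) ≃ₗ[ZMod 3] (Fin m → ZMod 3), g u = v := by
  have : Fact (Nat.Prime 3) := ⟨Nat.prime_three⟩
  let f := (LinearEquiv.toSpanNonzeroSingleton (ZMod 3) _ u hu).symm ≪≫ₗ
    (LinearEquiv.toSpanNonzeroSingleton (ZMod 3) _ v hv)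
  obtain ⟨g, hg⟩ := Submodule.exists_linearEquiv_restrict_eq f
  refine ⟨g, ?_⟩
  have h := hg (LinearEquiv.toSpanNonzeroSingleton (ZMod 3) _ u hu 1)
  simp only [f, LinearEquiv.trans_apply, LinearEquiv.symm_apply_apply] at h
  simpa using h.symm

lemma exists_weight {m w : ℕ} (hw : w ≤ m) : ∃ j : Fin m → ZMod 3, hammingNorm j = w := by
  refine ⟨fun k => if k.val < w then 1 else 0, ?_⟩
  have h : ((Finset.univ : Finset (Fin m)).filter
      (fun k => (if k.val < w then (1 : ZMod 3) else 0) ≠ 0)) =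
      Finset.univ.filter (fun k : Fin m => k.val < w) := by
    ext k
    by_cases hk : k.val < w <;> simp [hk]
  unfold hammingNorm
  rw [h, Fin.card_filter_val_lt]
  omega

/-- The additive character sum. -/
lemma charSum {m : ℕ} {K : Type} [Field K] [CharP K 2] {α : K} (hα : IsPrimitiveRoot α 3)
    (v : Fin m → ZMod 3) :
    ∑ i : Fin m → ZMod 3, AddChar.zmodChar 3 hα.pow_eq_one (∑ k, i k * v k) =
      if v = 0 then 1 else 0 := by
  split_ifs with h
  · subst h
    have h3 : (3 : K) = 1 := by
      have h2 : (2 : K) = 0 := CharTwo.two_eq_zero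
      linear_combination h2
    simp [h3]
  · obtain ⟨k, hk⟩ : ∃ k, v k ≠ 0 := by
      by_contra hc
      push Not at hc
      exact h (funext hc)
    set χ := AddChar.zmodChar 3 hα.pow_eq_one with hχ
    have key : ∑ i : Fin m → ZMod 3, χ (∑ k, i k * v k) =
        χ (v k) * ∑ i : Fin m → ZMod 3, χ (∑ k, i k * v k) := by
      rw [Finset.mul_sum]
      rw [← Equiv.sum_comp (Equiv.addLeft (Pi.single k (1 : ZMod 3)))]
      refine Finset.sum_congr rfl fun i _ => ?_
      rw [← AddChar.map_add_eq_mul]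
      congr 1
      simp [add_mul, Finset.sum_add_distrib, Pi.single_apply]
    have hne : χ (v k) ≠ 1 := by
      rw [hχ, AddChar.zmodChar_apply]
      intro h1
      have := hα.dvd_of_pow_eq_one _ h1
      have hlt := ZMod.val_lt (v k)
      have h0 : (v k).val = 0 := Nat.eq_zero_of_dvd_of_lt this hlt
      exact hk ((ZMod.val_eq_zero _).1 h0)
    have : (χ (v k) - 1) * ∑ i : Fin m → ZMod 3, χ (∑ k, i k * v k) = 0 := by
      linear_combination -key
    rcases mul_eq_zero.1 this with h1 | h1
    · exact absurd (sub_eq_zero.1 h1) hne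
    · exact h1

/-- The codeword with spectrum supported on `±j`. -/
def word {m : ℕ} (j : Fin m → ZMod 3) : (Fin m → ZMod 3) → ZMod 2 :=
  fun i => if ∑ k, i k * j k = 0 then 0 else 1

lemma word_dft {m : ℕ} {K : Type} [Field K] [CharP K 2] {α : K} (hα : IsPrimitiveRoot α 3)
    (j l : Fin m → ZMod 3) :
    ∑ i : Fin m → ZMod 3, (if word j i = 1 then (1 : K) else 0) * α ^ (∑ k, i k * l k).val =
      (if l + j = 0 then 1 else 0) + (if l - j = 0 then 1 else 0) := by
  rw [← charSum hα, ← charSum hα, ← Finset.sum_add_distrib]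
  refine Finset.sum_congr rfl fun i _ => ?_
  rw [← AddChar.zmodChar_apply hα.pow_eq_one]
  have e1 : ∑ k, i k * (l + j) k = ∑ k, i k * l k + ∑ k, i k * j k := by
    simp [mul_add, Finset.sum_add_distrib]
  have e2 : ∑ k, i k * (l - j) k = ∑ k, i k * l k + -∑ k, i k * j k := by
    simp [mul_add, Finset.sum_add_distrib, sub_eq_add_neg]
  rw [e1, e2, AddChar.map_add_eq_mul, AddChar.map_add_eq_mul, ← mul_add, mul_comm]
  congr 1
  unfold word
  have h2 : (2 : K) = 0 := CharTwo.two_eq_zero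
  have h11 : (1 : K) + 1 = 0 := by linear_combination h2
  have hs : α ^ 2 + α + 1 = 0 := by
    have hne : α - 1 ≠ 0 := sub_ne_zero.2 (hα.ne_one (by norm_num))
    apply mul_left_cancel₀ hne
    linear_combination hα.pow_eq_one
  generalize ∑ k, i k * j k = x
  have hx : x = 0 ∨ x = 1 ∨ x = 2 := by revert x; decide
  have n1 : -(1 : ZMod 3) = 2 := by decide
  have n2 : -(2 : ZMod 3) = 1 := by decide
  have v1 : (1 : ZMod 3).val = 1 := by decide
  have v2 : (2 : ZMod 3).val = 2 := by decide
  have z1 : (1 : ZMod 3) ≠ 0 := by decide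
  have z2 : (2 : ZMod 3) ≠ 0 := by decide
  rcases hx with rfl | rfl | rfl
  · simp [h11]
  · rw [n1]
    simp only [AddChar.zmodChar_apply, v1, v2, z1, if_false, if_true]
    linear_combination -hs + h2
  · rw [n2]
    simp only [AddChar.zmodChar_apply, v1, v2, z2, if_false, if_true]
    linear_combination -hs + h2

/-- For any non-boundary weight set `W ⊆ {0, 1, …, m}`, the affine
general linear group `AGL(m, 3)` is not contained in the automorphism group of `C(3, m, W)`. -/
theorem statement17 (m : ℕ) (hm : 1 ≤ m) (W : Set ℕ) (hW : W ⊆ Set.Iic m)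
    (hWb : ¬ BoundaryW m W)
    (K : Type) [Field K] [CharP K 2] (α : K) (hα : IsPrimitiveRoot α 3) :
    ¬ (aglSet m ⊆ codeAut (abelianCode 3 m W K α)) := by
  intro hsub
  obtain ⟨w₁, hw₁, hw₁0⟩ : ∃ w ∈ W, w ≠ 0 := by
    by_contra hc
    push Not at hc
    rcases Set.subset_singleton_iff_eq.1 (show W ⊆ {0} from fun w hw => hc w hw) with h | h
    · exact hWb (Or.inl h)
    · exact hWb (Or.inr (Or.inl h))
  obtain ⟨w₂, hw₂, hw₂0, hw₂m⟩ : ∃ w, w ∉ W ∧ w ≠ 0 ∧ w ≤ m := by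
    by_contra hc
    push Not at hc
    have hc' : ∀ w, w ≠ 0 → w ≤ m → w ∈ W := by
      intro w h0 hle
      by_contra hn
      exact absurd hle (not_le.2 (hc w hn h0))
    by_cases h0 : 0 ∈ W
    · refine hWb (Or.inr (Or.inr (Or.inr (Set.Subset.antisymm hW fun w hw => ?_))))
      by_cases hw0 : w = 0
      · rwa [hw0]
      · exact hc' w hw0 hw
    · refine hWb (Or.inr (Or.inr (Or.inl (Set.Subset.antisymm (fun w hw => ?_) fun w hw => ?_))))
      · exact ⟨Nat.one_le_iff_ne_zero.2 fun h => h0 (h ▸ hw), hW hw⟩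
      · exact hc' w (Nat.one_le_iff_ne_zero.1 hw.1) hw.2
  obtain ⟨u, hu⟩ := exists_weight (hW hw₁)
  obtain ⟨v, hv⟩ := exists_weight hw₂m
  have hu0 : u ≠ 0 := fun h => hw₁0 (by rw [← hu, h, hammingNorm_zero])
  have hv0 : v ≠ 0 := fun h => hw₂0 (by rw [← hv, h, hammingNorm_zero])
  obtain ⟨g, hg⟩ := exists_equiv_map u v hu0 hv0
  let B : Matrix (Fin m) (Fin m) (ZMod 3) := LinearMap.toMatrix' g.toLinearMap
  let B' : Matrix (Fin m) (Fin m) (ZMod 3) := LinearMap.toMatrix' g.symm.toLinearMap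
  have hBB' : B * B' = 1 := by
    simp only [B, B', ← LinearMap.toMatrix'_comp]
    simp
  have hB'B : B' * B = 1 := by
    simp only [B, B', ← LinearMap.toMatrix'_comp]
    simp
  have hBu : B *ᵥ u = v := by
    rw [LinearMap.toMatrix'_mulVec]; exact hg
  let e : Equiv.Perm (Fin m → ZMod 3) :=
    { toFun := fun x => B'ᵀ *ᵥ x
      invFun := fun x => Bᵀ *ᵥ x
      left_inv := fun x => by
        simp [Matrix.mulVec_mulVec, ← Matrix.transpose_mul, hB'B]
      right_inv := fun x => by
        simp [Matrix.mulVec_mulVec, ← Matrix.transpose_mul, hBB'] }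
  have he : e ∈ aglSet m := by
    refine ⟨B'ᵀ, 0, ?_, fun x => by simp [e]⟩
    refine ⟨⟨B'ᵀ, Bᵀ, ?_, ?_⟩, rfl⟩ <;>
      simp [← Matrix.transpose_mul, hB'B, hBB']
  have hC := hsub he
  have hword : word u ∘ ⇑e.symm = word v := by
    funext i
    have : ∑ k, (Bᵀ *ᵥ i) k * u k = ∑ k, i k * v k := by
      change (Bᵀ *ᵥ i) ⬝ᵥ u = i ⬝ᵥ v
      rw [← hBu, Matrix.mulVec_transpose, Matrix.dotProduct_mulVec]
    change word u (Bᵀ *ᵥ i) = word v i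
    unfold word
    rw [this]
  have hmem : word u ∈ abelianCode 3 m W K α := by
    intro l hl
    rw [word_dft hα]
    have h1 : ¬ (l + u = 0) := fun h => by
      rw [eq_neg_of_add_eq_zero_left h] at hl
      have hneg : hammingNorm (-u) = hammingNorm u := by
        simp [hammingNorm]
      rw [hneg, hu] at hl
      exact hl hw₁
    have h2 : ¬ (l - u = 0) := fun h => by
      rw [sub_eq_zero.1 h, hu] at hl
      exact hl hw₁
    simp [h1, h2]
  have hmem2 : word v ∈ abelianCode 3 m W K α := by
    have hC' : (fun c => c ∘ ⇑e.symm) '' abelianCode 3 m W K α = abelianCode 3 m W K α := hC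
    rw [← hC', ← hword]
    exact ⟨word u, hmem, rfl⟩
  have := hmem2 v (by rw [hv]; exact hw₂)
  rw [word_dft hα] at this
  have hvv : ¬ (v + v = 0) := by
    intro h
    apply hv0
    funext k
    have hk := congrFun h k
    simp only [Pi.add_apply, Pi.zero_apply] at hk ⊢
    generalize v k = x at hk
    revert x
    decide
  simp [hvv] at this
end

section
/- For m ≤ 3, the orthogonal group O(m,3) is generated by the set M_m of invertible m×m monomial matrices over F_3. For m ≥ 4, O(m,3) is generated by M_m together with the block diagonal matrix diag(H_4, I_{m−4}), where H_4 = H_2 ⊗ H_2 and H_2 is the 2×2 matrix with rows (1,1) and (1,−1) over F_3. -/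
open Matrix

/-- A monomial matrix: `A = P D` for a permutation matrix `P` and an invertible diagonal
matrix `D`; equivalently `A i j = d j` if `i = p j` (and `0` otherwise) for a permutation
`p` and nonzero scalars `d j`. -/
def IsMonomial {m : ℕ} (A : Matrix (Fin m) (Fin m) (ZMod 3)) : Prop :=
  ∃ (p : Equiv.Perm (Fin m)) (d : Fin m → ZMod 3),
    (∀ i, d i ≠ 0) ∧ ∀ i j, A i j = if i = p j then d j else 0

/-- The orthogonal group `O(m, 3)`: invertible matrices `A` over `F_3` with `AᵀA = I`,
as a subgroup of `GL(m, 3)`. -/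
def OGL (m : ℕ) : Subgroup (GL (Fin m) (ZMod 3)) where
  carrier := { A | (A : Matrix (Fin m) (Fin m) (ZMod 3))ᵀ * (A : Matrix (Fin m) (Fin m) (ZMod 3)) = 1 }
  one_mem' := by simp
  mul_mem' := by
    intro a b ha hb
    simp only [Set.mem_setOf_eq] at *
    rw [Units.val_mul, Matrix.transpose_mul, Matrix.mul_assoc,
      ← Matrix.mul_assoc ((a : Matrix (Fin m) (Fin m) (ZMod 3)))ᵀ, ha, Matrix.one_mul, hb]
  inv_mem' := by
    intro a ha
    simp only [Set.mem_setOf_eq] at *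
    have h1 : ((a⁻¹ : GL (Fin m) (ZMod 3)) : Matrix (Fin m) (Fin m) (ZMod 3))
        = (a : Matrix (Fin m) (Fin m) (ZMod 3))ᵀ := by
      calc ((a⁻¹ : GL (Fin m) (ZMod 3)) : Matrix (Fin m) (Fin m) (ZMod 3))
          = 1 * ((a⁻¹ : GL (Fin m) (ZMod 3)) : Matrix (Fin m) (Fin m) (ZMod 3)) :=
            (Matrix.one_mul _).symm
        _ = ((a : Matrix (Fin m) (Fin m) (ZMod 3))ᵀ * (a : Matrix (Fin m) (Fin m) (ZMod 3))) *
              ((a⁻¹ : GL (Fin m) (ZMod 3)) : Matrix (Fin m) (Fin m) (ZMod 3)) := by rw [ha]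
        _ = (a : Matrix (Fin m) (Fin m) (ZMod 3))ᵀ *
              ((a : Matrix (Fin m) (Fin m) (ZMod 3)) *
                ((a⁻¹ : GL (Fin m) (ZMod 3)) : Matrix (Fin m) (Fin m) (ZMod 3))) := by
            rw [Matrix.mul_assoc]
        _ = (a : Matrix (Fin m) (Fin m) (ZMod 3))ᵀ := by
            rw [show ((a : Matrix (Fin m) (Fin m) (ZMod 3)) *
              ((a⁻¹ : GL (Fin m) (ZMod 3)) : Matrix (Fin m) (Fin m) (ZMod 3))) = 1 from a.mul_inv,
              Matrix.mul_one]
    rw [h1, Matrix.transpose_transpose, ← h1, a.mul_inv]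

/-- The 2×2 matrix with rows `(1, 1)` and `(1, −1)`, over `F_3`. -/
def H2 : Matrix (Fin 2) (Fin 2) (ZMod 3) := !![1, 1; 1, -1]

open Kronecker in
/-- `H_4 = H_2 ⊗ H_2` (Kronecker product), over `F_3`. -/
def H4 : Matrix (Fin 4) (Fin 4) (ZMod 3) :=
  Matrix.reindex finProdFinEquiv finProdFinEquiv (H2 ⊗ₖ H2)

/-- The block-diagonal matrix `diag(H_4, I_{m−4})`. -/
def diagH4 (m : ℕ) : Matrix (Fin m) (Fin m) (ZMod 3) :=
  Matrix.of fun i j =>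
    if h : (i : ℕ) < 4 ∧ (j : ℕ) < 4 then H4 ⟨i, h.1⟩ ⟨j, h.2⟩
    else if (i : ℕ) = (j : ℕ) then 1 else 0

namespace OG

/-- Monomial matrix. -/
def mono {m : ℕ} (p : Equiv.Perm (Fin m)) (d : Fin m → ZMod 3) :
    Matrix (Fin m) (Fin m) (ZMod 3) :=
  Matrix.of fun i j => if i = p j then d j else 0

/-- Reflection in a vector of norm one. -/
def refl {m : ℕ} (u : Fin m → ZMod 3) : Matrix (Fin m) (Fin m) (ZMod 3) :=
  1 + vecMulVec u u

/-- Support of a vector. -/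
def supp {m : ℕ} (v : Fin m → ZMod 3) : Finset (Fin m) := Finset.univ.filter fun i => v i ≠ 0

lemma mem_supp {m : ℕ} (v : Fin m → ZMod 3) (i : Fin m) : i ∈ supp v ↔ v i ≠ 0 := by
  simp [supp]

lemma sq_one : ∀ c : ZMod 3, c ≠ 0 → c * c = 1 := by decide

lemma mono_orth {m : ℕ} (p : Equiv.Perm (Fin m)) (d : Fin m → ZMod 3) (hd : ∀ i, d i ≠ 0) :
    (mono p d)ᵀ * mono p d = 1 := by
  ext i j
  simp only [mul_apply, transpose_apply, mono, of_apply, ite_mul, zero_mul]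
  rw [Finset.sum_ite_eq' Finset.univ (p i)]
  by_cases h : i = j
  · subst h; simp [sq_one _ (hd i)]
  · simp [h]

lemma mono_mulVec {m : ℕ} (p : Equiv.Perm (Fin m)) (d : Fin m → ZMod 3) (v : Fin m → ZMod 3)
    (i : Fin m) : (mono p d *ᵥ v) (p i) = d i * v i := by
  simp only [mulVec, dotProduct, mono, of_apply, ite_mul, zero_mul, p.injective.eq_iff]
  rw [Finset.sum_ite_eq Finset.univ i]
  simp

lemma dot_self {m : ℕ} (v : Fin m → ZMod 3) : v ⬝ᵥ v = ((supp v).card : ZMod 3) := by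
  have : ∀ i, v i * v i = if v i ≠ 0 then 1 else 0 := by
    intro i
    split_ifs with h
    · exact sq_one _ h
    · push Not at h; simp [h]
  simp only [dotProduct, this, supp]
  rw [Finset.sum_boole]

lemma refl_orth {m : ℕ} (u : Fin m → ZMod 3) (hu : u ⬝ᵥ u = 1) : (refl u)ᵀ * refl u = 1 := by
  have h3 : ∀ x : ZMod 3, x + (x + x) = 0 := by decide
  simp only [refl, transpose_add, transpose_one, transpose_vecMulVec, add_mul, mul_add, one_mul,
    mul_one, vecMulVec_mul_vecMulVec, hu, one_smul]
  ext i j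
  simp [add_assoc, h3]

lemma refl_mulVec {m : ℕ} (u v : Fin m → ZMod 3) (i : Fin m) :
    (refl u *ᵥ v) i = v i + (u ⬝ᵥ v) * u i := by
  simp [refl, add_mulVec, vecMulVec_mulVec, mul_comm]

lemma exists_gl {m : ℕ} (A : Matrix (Fin m) (Fin m) (ZMod 3)) (h : Aᵀ * A = 1) :
    ∃ g : GL (Fin m) (ZMod 3), (g : Matrix (Fin m) (Fin m) (ZMod 3)) = A :=
  ⟨⟨A, Aᵀ, mul_eq_one_comm.mp h, h⟩, rfl⟩

/-- First four coordinates. -/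
def u0 (m : ℕ) : Fin m → ZMod 3 := fun i => if (i : ℕ) < 4 then 1 else 0

lemma supp_u0 (n : ℕ) : (supp (u0 (n + 4))).card = 4 := by
  have : supp (u0 (n + 4)) = Finset.univ.map (Fin.castLEEmb (show 4 ≤ n + 4 by omega)) := by
    ext i
    simp only [mem_supp, u0, Finset.mem_map, Finset.mem_univ, true_and]
    constructor
    · intro h
      have h4 : (i : ℕ) < 4 := by by_contra h'; simp [h'] at h
      exact ⟨⟨i, h4⟩, by ext; simp⟩
    · rintro ⟨a, rfl⟩
      simp [a.2]
  rw [this]; simp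

lemma mono_one_mul {m : ℕ} (p : Equiv.Perm (Fin m)) (d : Fin m → ZMod 3)
    (A : Matrix (Fin m) (Fin m) (ZMod 3)) (i j : Fin m) :
    (mono p d * A) (p i) j = d i * A i j := by
  simpa [mulVec, dotProduct, mul_apply] using mono_mulVec p d (fun k => A k j) i

lemma mul_mono {m : ℕ} (p : Equiv.Perm (Fin m)) (d : Fin m → ZMod 3)
    (A : Matrix (Fin m) (Fin m) (ZMod 3)) (i j : Fin m) :
    (A * mono p d) i j = A i (p j) * d j := by
  simp [mul_apply, mono]

/-- Sign vectors. -/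
def d1 (m : ℕ) : Fin m → ZMod 3 := fun i => if (i : ℕ) = 1 ∨ (i : ℕ) = 2 ∨ (i : ℕ) = 3 then -1 else 1
/-- Sign vectors. -/
def d2 (m : ℕ) : Fin m → ZMod 3 := fun i => if (i : ℕ) = 0 then -1 else 1

lemma H4_core : ∀ i j : Fin 4,
    H4 (Equiv.swap 1 2 i) j = (d1 4 i * refl (u0 4) i j) * d2 4 j := by
  decide

lemma diagH4_eq (n : ℕ) : diagH4 (n + 4) =
    mono (Equiv.swap ⟨1, by omega⟩ ⟨2, by omega⟩) (d1 (n + 4)) * refl (u0 (n + 4)) *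
      mono 1 (d2 (n + 4)) := by
  ext i' j
  obtain ⟨i, rfl⟩ := (Equiv.swap (⟨1, by omega⟩ : Fin (n + 4)) ⟨2, by omega⟩).surjective i'
  rw [mul_mono, mono_one_mul]
  by_cases hi : (i : ℕ) < 4
  · have hs : ((Equiv.swap (⟨1, by omega⟩ : Fin (n + 4)) ⟨2, by omega⟩ i : Fin (n + 4)) : ℕ) =
        (Equiv.swap (1 : Fin 4) 2 ⟨i, hi⟩ : Fin 4) := by
      simp only [Equiv.swap_apply_def, Fin.ext_iff]
      split_ifs <;> simp_all
    by_cases hj : (j : ℕ) < 4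
    · have := H4_core ⟨i, hi⟩ ⟨j, hj⟩
      simp only [diagH4, of_apply, hs, Fin.is_lt, hj, and_self, dite_true, Fin.eta]
      rw [this]
      have e1 : (1 : Matrix (Fin 4) (Fin 4) (ZMod 3)) ⟨i, hi⟩ ⟨j, hj⟩ =
          (1 : Matrix (Fin (n + 4)) (Fin (n + 4)) (ZMod 3)) i j := by
        simp only [one_apply, Fin.ext_iff]
      simp only [d1, d2, refl, u0, vecMulVec_apply, Matrix.add_apply, e1, Equiv.Perm.one_apply]
    · have hne : ¬ ((Equiv.swap (1 : Fin 4) 2 ⟨i, hi⟩ : Fin 4) : ℕ) = j := by omega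
      have hne' : ¬ (i : ℕ) = j := by omega
      rw [← hs] at hne
      generalize Equiv.swap (⟨1, by omega⟩ : Fin (n + 4)) ⟨2, by omega⟩ i = i' at hne
      simp [diagH4, hj, hne, hne', refl, u0, vecMulVec_apply, one_apply, Fin.ext_iff]
  · have hs : Equiv.swap (⟨1, by omega⟩ : Fin (n + 4)) ⟨2, by omega⟩ i = i := by
      apply Equiv.swap_apply_of_ne_of_ne <;> (rw [Ne, Fin.ext_iff]; simp; omega)
    rw [hs]
    have h1 : d1 (n + 4) i = 1 := by simp [d1]; omega
    by_cases hij : i = j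
    · subst hij
      have h2 : d2 (n + 4) i = 1 := by simp [d2]; rintro rfl; simp at hi
      simp [diagH4, hi, h1, h2, refl, u0, vecMulVec_apply]
    · have : ¬ (i : ℕ) = j := by rwa [Fin.ext_iff] at hij
      simp [diagH4, hi, h1, hij, this, refl, u0, vecMulVec_apply]

lemma d1_ne (m : ℕ) (i : Fin m) : d1 m i ≠ 0 := by
  unfold d1; split_ifs <;> decide

lemma d2_ne (m : ℕ) (i : Fin m) : d2 m i ≠ 0 := by
  unfold d2; split_ifs <;> decide

lemma u0_dot (n : ℕ) : u0 (n + 4) ⬝ᵥ u0 (n + 4) = 1 := by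
  rw [dot_self, supp_u0]; decide

lemma orth_mul {m : ℕ} {A B : Matrix (Fin m) (Fin m) (ZMod 3)} (hA : Aᵀ * A = 1)
    (hB : Bᵀ * B = 1) : (A * B)ᵀ * (A * B) = 1 := by
  rw [transpose_mul, Matrix.mul_assoc, ← Matrix.mul_assoc Aᵀ, hA, Matrix.one_mul, hB]

lemma diagH4_orth (n : ℕ) : (diagH4 (n + 4))ᵀ * diagH4 (n + 4) = 1 := by
  rw [diagH4_eq]
  exact orth_mul (orth_mul (mono_orth _ _ (d1_ne _)) (refl_orth _ (u0_dot n)))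
    (mono_orth _ _ (d2_ne _))

/-- Matrices of elements of `G`. -/
def Good {m : ℕ} (G : Subgroup (GL (Fin m) (ZMod 3))) (A : Matrix (Fin m) (Fin m) (ZMod 3)) :
    Prop := ∃ g ∈ G, (g : Matrix (Fin m) (Fin m) (ZMod 3)) = A

lemma Good.mul {m : ℕ} {G : Subgroup (GL (Fin m) (ZMod 3))}
    {A B : Matrix (Fin m) (Fin m) (ZMod 3)} (hA : Good G A) (hB : Good G B) :
    Good G (A * B) := by
  obtain ⟨g, hg, rfl⟩ := hA
  obtain ⟨h, hh, rfl⟩ := hB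
  exact ⟨g * h, G.mul_mem hg hh, rfl⟩

lemma Good.one {m : ℕ} {G : Subgroup (GL (Fin m) (ZMod 3))} : Good G 1 := ⟨1, G.one_mem, rfl⟩

lemma Good.transpose {m : ℕ} {G : Subgroup (GL (Fin m) (ZMod 3))}
    {A : Matrix (Fin m) (Fin m) (ZMod 3)} (hA : Good G A) (h : Aᵀ * A = 1) :
    Good G Aᵀ := by
  obtain ⟨g, hg, rfl⟩ := hA
  refine ⟨g⁻¹, G.inv_mem hg, ?_⟩
  rw [Matrix.coe_units_inv]
  exact inv_eq_left_inv h

/-- `G` contains all the monomial matrices. -/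
def HM {m : ℕ} (G : Subgroup (GL (Fin m) (ZMod 3))) : Prop :=
  ∀ p d, (∀ i, d i ≠ 0) → Good G (mono p d)

lemma good_refl {n : ℕ} {G : Subgroup (GL (Fin (n + 4)) (ZMod 3))} (hM : HM G)
    (hH : Good G (diagH4 (n + 4))) (u : Fin (n + 4) → ZMod 3) (hu : (supp u).card = 4) :
    Good G (refl u) := by
  have h0 : Good G (refl (u0 (n + 4))) := by
    have e := diagH4_eq n
    set P := mono (Equiv.swap ⟨1, by omega⟩ ⟨2, by omega⟩) (d1 (n + 4)) with hP
    set Q := mono 1 (d2 (n + 4)) with hQ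
    have oP : Pᵀ * P = 1 := mono_orth _ _ (d1_ne _)
    have oQ : Qᵀ * Q = 1 := mono_orth _ _ (d2_ne _)
    have gP : Good G P := hM _ _ (d1_ne _)
    have gQ : Good G Q := hM _ _ (d2_ne _)
    have : refl (u0 (n + 4)) = Pᵀ * diagH4 (n + 4) * Qᵀ := by
      rw [e, Matrix.mul_assoc P, ← Matrix.mul_assoc Pᵀ, oP, Matrix.one_mul, Matrix.mul_assoc,
        mul_eq_one_comm.mp oQ, Matrix.mul_one]
    rw [this]
    exact ((gP.transpose oP).mul hH).mul (gQ.transpose oQ)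
  obtain ⟨p, hp⟩ := Equiv.Perm.exists_map_finset_eq (supp (u0 (n + 4))) (supp u)
    (by rw [hu, supp_u0])
  have hp' : ∀ i, u0 (n + 4) i ≠ 0 ↔ u (p i) ≠ 0 := by
    intro i
    rw [← mem_supp, ← mem_supp, ← hp]
    simp
  let d : Fin (n + 4) → ZMod 3 := fun i => if u (p i) = 0 then 1 else u (p i)
  have hd : ∀ i, d i ≠ 0 := by
    intro i; simp only [d]; split_ifs with h
    · decide
    · exact h
  have hMu : mono p d *ᵥ u0 (n + 4) = u := by
    ext i'
    obtain ⟨i, rfl⟩ := p.surjective i'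
    rw [mono_mulVec]
    by_cases h : u (p i) = 0
    · have := (hp' i).not_left.mpr (by simpa using h)
      simp only [ne_eq, not_not] at this
      simp [h, this]
    · have h1 := (hp' i).mpr h
      have : u0 (n + 4) i = 1 := by
        unfold u0 at h1 ⊢
        split_ifs at h1 ⊢ with h2
        · rfl
        · exact absurd rfl h1
      simp [d, h, this]
  have oM := mono_orth p d hd
  have : refl u = mono p d * refl (u0 (n + 4)) * (mono p d)ᵀ := by
    simp only [refl, mul_add, add_mul, mul_one, mul_vecMulVec, vecMulVec_mul, vecMul_transpose, hMu,
      mul_eq_one_comm.mp oM]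
  rw [this]
  exact ((hM p d hd).mul h0).mul ((hM p d hd).transpose oM)

lemma mulVec_single_mono {m : ℕ} (p : Equiv.Perm (Fin m)) (d : Fin m → ZMod 3) (j : Fin m) :
    mono p d *ᵥ Pi.single j 1 = Pi.single (p j) (d j) := by
  ext i'
  obtain ⟨i, rfl⟩ := p.surjective i'
  rw [mono_mulVec]
  by_cases h : i = j
  · subst h; simp
  · simp [Pi.single_apply, h]

lemma reduce {m : ℕ} {G : Subgroup (GL (Fin m) (ZMod 3))} (hM : HM G)
    (hR : ∀ u : Fin m → ZMod 3, (supp u).card = 4 → Good G (refl u)) (k : Fin m) :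
    ∀ (w : ℕ) (v : Fin m → ZMod 3), (supp v).card = w → v ⬝ᵥ v = 1 → (∀ i < k, v i = 0) →
      ∃ A, Good G A ∧ (∀ j < k, A *ᵥ Pi.single j 1 = Pi.single j 1) ∧
        A *ᵥ v = Pi.single k 1 := by
  intro w
  induction w using Nat.strong_induction_on with
  | _ w ih =>
  intro v hw hv hk
  have hw1 : (w : ZMod 3) = 1 := by rw [← hw, ← dot_self, hv]
  by_cases h4 : 4 ≤ w
  · obtain ⟨t, ht, htc⟩ := Finset.exists_subset_card_eq (hw ▸ h4 : 4 ≤ (supp v).card)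
    obtain ⟨a, ha⟩ : t.Nonempty := by rw [← Finset.card_pos]; omega
    let u : Fin m → ZMod 3 := fun i => if i ∈ t then (if i = a then - v i else v i) else 0
    have hsu : supp u = t := by
      ext i
      rw [mem_supp]
      simp only [u]
      by_cases hi : i ∈ t
      · have := (mem_supp v i).mp (ht hi)
        split_ifs <;> simp [hi, this]
      · simp [hi]
    have hdot : u ⬝ᵥ v = -1 := by
      have : ∀ i, u i * v i = (if i ∈ t then 1 else 0) + (if i = a then 1 else 0) := by
        intro i
        simp only [u]
        by_cases hi : i ∈ t
        · have := sq_one _ ((mem_supp v i).mp (ht hi))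
          by_cases hia : i = a
          · subst hia; simp [hi, this]; decide
          · simp [hi, hia, this]
        · have : i ≠ a := by rintro rfl; exact hi ha
          simp [hi, this]
      simp only [dotProduct, this, Finset.sum_add_distrib]
      simp [htc]; decide
    have gR : Good G (refl u) := hR u (by rw [hsu, htc])
    have oR : (refl u)ᵀ * refl u = 1 := refl_orth u (by rw [dot_self, hsu, htc]; decide)
    set v' := refl u *ᵥ v with hv'
    have hv'i : ∀ i, v' i = v i - u i := by
      intro i; rw [hv', refl_mulVec, hdot]; ring
    have hsub : supp v' ⊆ insert a (supp v \ t) := by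
      intro i hi
      rw [mem_supp, hv'i] at hi
      simp only [Finset.mem_insert, Finset.mem_sdiff, mem_supp]
      by_contra hc
      push Not at hc
      obtain ⟨hia, hc⟩ := hc
      apply hi
      by_cases hit : i ∈ t
      · simp [u, hit, hia]
      · have : v i = 0 := by by_contra h0; exact hit (hc h0)
        simp [u, hit, this]
    have hcard : (supp v').card < w := by
      have h1 := Finset.card_le_card hsub
      have h2 := Finset.card_insert_le a (supp v \ t)
      have h3 := Finset.card_sdiff_add_card_eq_card ht
      omega
    have hu0 : ∀ i < k, u i = 0 := by
      intro i hi
      by_contra h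
      have : i ∈ supp v := ht (hsu ▸ (mem_supp u i).mpr h)
      exact (mem_supp v i).mp this (hk i hi)
    obtain ⟨A, gA, fA, eA⟩ := ih _ hcard v' rfl (by
        rw [hv', dotProduct_mulVec, vecMul_mulVec, oR, vecMul_one, hv])
      (by intro i hi; rw [hv'i, hk i hi, hu0 i hi, sub_zero])
    refine ⟨A * refl u, gA.mul gR, ?_, ?_⟩
    · intro j hj
      rw [← mulVec_mulVec]
      have : refl u *ᵥ Pi.single j 1 = Pi.single j 1 := by
        ext i; rw [refl_mulVec]; simp [hu0 j hj]
      rw [this, fA j hj]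
    · rw [← mulVec_mulVec, ← hv', eA]
  · have hw' : w = 1 := by
      have : w < 4 := by omega
      interval_cases w
      · exact absurd hw1 (by decide)
      · rfl
      · exact absurd hw1 (by decide)
      · exact absurd hw1 (by decide)
    subst hw'
    obtain ⟨a, ha⟩ := Finset.card_eq_one.mp hw
    have hva : v a ≠ 0 := (mem_supp v a).mp (by simp [ha])
    have hvn : ∀ i, i ≠ a → v i = 0 := by
      intro i hi
      by_contra h
      have := (mem_supp v i).mpr h
      rw [ha] at this
      exact hi (Finset.mem_singleton.mp this)
    have hak : ¬ a < k := fun h => hva (hk a h)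
    let d : Fin m → ZMod 3 := fun i => if i = a then v a else 1
    have hd : ∀ i, d i ≠ 0 := by
      intro i; simp only [d]; split_ifs
      · exact hva
      · decide
    refine ⟨mono (Equiv.swap a k) d, hM _ _ hd, ?_, ?_⟩
    · intro j hj
      have hja : j ≠ a := by rintro rfl; exact hak hj
      rw [mulVec_single_mono, Equiv.swap_apply_of_ne_of_ne hja hj.ne]
      simp [d, hja]
    · ext i'
      obtain ⟨i, rfl⟩ := (Equiv.swap a k).surjective i'
      rw [mono_mulVec]
      by_cases hia : i = a
      · subst hia; simp [d, sq_one _ hva]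
      · rw [hvn i hia, mul_zero, Pi.single_apply, if_neg]
        intro h
        apply hia
        apply (Equiv.swap a k).injective
        rw [h, Equiv.swap_apply_left]

lemma all_good {m : ℕ} {G : Subgroup (GL (Fin m) (ZMod 3))} (hM : HM G) (hG : G ≤ OGL m)
    (hR : ∀ u : Fin m → ZMod 3, (supp u).card = 4 → Good G (refl u)) : OGL m ≤ G := by
  intro A hA
  have key : ∀ k ≤ m, ∃ g ∈ G, ∀ j : Fin m, (j : ℕ) < k →
      ((g * A : GL (Fin m) (ZMod 3)) : Matrix (Fin m) (Fin m) (ZMod 3)) *ᵥ Pi.single j 1 =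
        Pi.single j 1 := by
    intro k
    induction k with
    | zero => intro _; exact ⟨1, G.one_mem, fun j hj => absurd hj (by omega)⟩
    | succ k ih =>
      intro hk
      obtain ⟨g, hg, hgj⟩ := ih (by omega)
      set B := ((g * A : GL (Fin m) (ZMod 3)) : Matrix (Fin m) (Fin m) (ZMod 3)) with hB
      have oB : Bᵀ * B = 1 := (OGL m).mul_mem (hG hg) hA
      let K : Fin m := ⟨k, hk⟩
      have hdot : ∀ i j : Fin m, (B *ᵥ Pi.single i 1) ⬝ᵥ (B *ᵥ Pi.single j 1) =
          (Pi.single i 1 : Fin m → ZMod 3) ⬝ᵥ Pi.single j 1 := by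
        intro i j
        rw [dotProduct_mulVec, vecMul_mulVec, oB, vecMul_one]
      obtain ⟨C, ⟨c, hc, rfl⟩, fC, eC⟩ := reduce hM hR K _ (B *ᵥ Pi.single K 1) rfl
        (by rw [hdot]; simp) (by
          intro i hi
          have := hdot i K
          rw [hgj i hi] at this
          simpa [Pi.single_apply, hi.ne] using this)
      refine ⟨c * g, G.mul_mem hc hg, ?_⟩
      intro j hj
      rw [mul_assoc, Units.val_mul, ← hB, ← mulVec_mulVec]
      by_cases hjk : (j : ℕ) < k
      · rw [hgj j hjk, fC j hjk]
      · have : j = K := Fin.ext (by simp [K]; omega)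
        rw [this, eC]
  obtain ⟨g, hg, h⟩ := key m le_rfl
  have h1 : g * A = 1 := by
    apply Units.ext
    apply Matrix.ext_of_mulVec_single
    intro j
    rw [h j j.2, Units.val_one, one_mulVec]
  rw [eq_inv_of_mul_eq_one_right h1]
  exact G.inv_mem hg

lemma mono_of_isMonomial {m : ℕ} {A : GL (Fin m) (ZMod 3)}
    (h : IsMonomial (A : Matrix (Fin m) (Fin m) (ZMod 3))) : A ∈ OGL m := by
  obtain ⟨p, d, hd, e⟩ := h
  have : (A : Matrix (Fin m) (Fin m) (ZMod 3)) = mono p d := by ext i j; rw [e]; rfl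
  change (A : Matrix (Fin m) (Fin m) (ZMod 3))ᵀ * (A : Matrix (Fin m) (Fin m) (ZMod 3)) = 1
  rw [this]
  exact mono_orth p d hd

lemma hM_closure {m : ℕ} (S : Set (GL (Fin m) (ZMod 3)))
    (hS : {A : GL (Fin m) (ZMod 3) | IsMonomial (A : Matrix (Fin m) (Fin m) (ZMod 3))} ⊆ S) :
    HM (Subgroup.closure S) := by
  intro p d hd
  obtain ⟨g, hg⟩ := exists_gl _ (mono_orth p d hd)
  refine ⟨g, Subgroup.subset_closure (hS ⟨p, d, hd, ?_⟩), hg⟩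
  intro i j
  rw [hg]; rfl

end OG

/-- For `m ≤ 3`, the orthogonal group `O(m, 3)` is generated by the
invertible monomial matrices; for `m ≥ 4` it is generated by the invertible monomial
matrices together with `diag(H_4, I_{m−4})`, where `H_4 = H_2 ⊗ H_2`. -/
theorem statement18 (m : ℕ) :
    (m ≤ 3 →
      Subgroup.closure
        {A : GL (Fin m) (ZMod 3) | IsMonomial (A : Matrix (Fin m) (Fin m) (ZMod 3))} = OGL m) ∧
    (4 ≤ m →
      Subgroup.closure
        ({A : GL (Fin m) (ZMod 3) | IsMonomial (A : Matrix (Fin m) (Fin m) (ZMod 3))} ∪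
          {A : GL (Fin m) (ZMod 3) | (A : Matrix (Fin m) (Fin m) (ZMod 3)) = diagH4 m}) =
        OGL m) := by
  constructor
  · intro hm
    have hle : Subgroup.closure
        {A : GL (Fin m) (ZMod 3) | IsMonomial (A : Matrix (Fin m) (Fin m) (ZMod 3))} ≤ OGL m := by
      rw [Subgroup.closure_le]
      exact fun A hA => OG.mono_of_isMonomial hA
    refine le_antisymm hle (OG.all_good (OG.hM_closure _ subset_rfl) hle ?_)
    intro u hu
    have := Finset.card_le_univ (OG.supp u)
    rw [Fintype.card_fin] at this
    omega
  · intro hm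
    obtain ⟨n, rfl⟩ := Nat.exists_eq_add_of_le' hm
    have hle : Subgroup.closure
        ({A : GL (Fin (n + 4)) (ZMod 3) |
            IsMonomial (A : Matrix (Fin (n + 4)) (Fin (n + 4)) (ZMod 3))} ∪
          {A : GL (Fin (n + 4)) (ZMod 3) |
            (A : Matrix (Fin (n + 4)) (Fin (n + 4)) (ZMod 3)) = diagH4 (n + 4)}) ≤
        OGL (n + 4) := by
      rw [Subgroup.closure_le]
      rintro A (hA | hA)
      · exact OG.mono_of_isMonomial hA
      · change (A : Matrix (Fin (n + 4)) (Fin (n + 4)) (ZMod 3))ᵀ *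
          (A : Matrix (Fin (n + 4)) (Fin (n + 4)) (ZMod 3)) = 1
        rw [Set.mem_setOf_eq.mp hA]
        exact OG.diagH4_orth n
    have hM := OG.hM_closure _ (Set.subset_union_left (s := {A : GL (Fin (n + 4)) (ZMod 3) |
            IsMonomial (A : Matrix (Fin (n + 4)) (Fin (n + 4)) (ZMod 3))}) (t :=
          {A : GL (Fin (n + 4)) (ZMod 3) |
            (A : Matrix (Fin (n + 4)) (Fin (n + 4)) (ZMod 3)) = diagH4 (n + 4)}))
    refine le_antisymm hle (OG.all_good hM hle ?_)
    intro u hu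
    refine OG.good_refl hM ?_ u hu
    obtain ⟨g, hg⟩ := OG.exists_gl _ (OG.diagH4_orth n)
    exact ⟨g, Subgroup.subset_closure (Or.inr hg), hg⟩
end
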